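/- arXiv:1507.01283 — 2 statements merged into one kernel-verified Lean document; each statement's English description precedes it below -/
import Mathlib

section
/- For every integer n ≥ 1 and every prime power q with gcd(q−1, n) = 1, the cardinality of Res_n(F_q) equals q^{2n−1}. -/
open Polynomial

/-- The resultant `Res(φ, ψ)` of a monic polynomial `φ` and a polynomial `ψ`, computed
(inside the algebraic closure) as the product `∏ ψ(αᵢ)` over the roots `αᵢ` of `φ`,
counted with multiplicity. -/
noncomputable def resultantAC {k : Type*} [Field k] (φ ψ : k[X]) : AlgebraicClosure k :=
  (((φ.map (algebraMap k (AlgebraicClosure k))).roots).map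
    fun α => (ψ.map (algebraMap k (AlgebraicClosure k))).eval α).prod

/-- `Res_n(k)`: the set of pairs `(φ, ψ)` of monic degree-`n` polynomials over `k`
with `Res(φ, ψ) = 1`. -/
def ResPairs (k : Type*) [Field k] (n : ℕ) : Set (k[X] × k[X]) :=
  {p | p.1.Monic ∧ p.1.natDegree = n ∧ p.2.Monic ∧ p.2.natDegree = n ∧
    resultantAC p.1 p.2 = 1}

/-!
Write `q = |F|` and let `cₘ` be the number of coprime pairs of monic polynomials of degree `m`.
Splitting off the monic gcd from a pair of monic polynomials of degree `n` gives
`∑ qⁱ c₍ₙ₋ᵢ₎ = q²ⁿ`, so that `cₙ = (q - 1) q²ⁿ⁻¹` for `n ≥ 1`. The coprime pairs are those with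
nonzero resultant. For a unit `u`, the homothety `ψ ↦ φ + u (ψ - φ)` permutes the monic `ψ` of
degree `n` and multiplies `Res(φ, ψ)` by `uⁿ`, since `Res(φ, ·)` only depends on its argument
modulo `φ`. When `gcd(q - 1, n) = 1`, every unit is an `n`-th power, so the `q - 1` nonzero fibres
of the resultant all have the same size `q²ⁿ⁻¹`.
-/

/-- The fibre over `c` of the resultant, on pairs of monic polynomials of degree `n`. It uses
`Polynomial.resultant`, whose value lies in the coefficient ring; at `c = 1` over a field it is
`ResPairs`. -/
def resultantFiber (R : Type*) [CommRing R] (n : ℕ) (c : R) : Set (R[X] × R[X]) :=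
  {p | p.1.IsMonicOfDegree n ∧ p.2.IsMonicOfDegree n ∧ p.1.resultant p.2 n n = c}

/-- The set of pairs of coprime monic polynomials of degree `n`. -/
def coprimeMonicPairs (R : Type*) [CommSemiring R] (n : ℕ) : Set (R[X] × R[X]) :=
  {p | p.1.IsMonicOfDegree n ∧ p.2.IsMonicOfDegree n ∧ IsCoprime p.1 p.2}

section Resultant

variable {R : Type*} [CommRing R]

lemma resultant_homothety {f : R[X]} {n : ℕ} (hf : f.natDegree ≤ n) (g : R[X]) (u : R) :
    f.resultant (AffineMap.homothety f u g) n n = u ^ n * f.resultant g n n := by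
  have expand : AffineMap.homothety f u g = C u * g + f * C (1 - u) := by
    simp only [AffineMap.homothety_apply, vsub_eq_sub, vadd_eq_add, smul_eq_C_mul, map_sub,
      map_one]
    ring
  rw [expand, resultant_add_mul_right _ _ _ _ _ (by simp) hf, resultant_C_mul_right]

variable [Nontrivial R]

lemma isMonicOfDegree_homothety {f g : R[X]} {n : ℕ} (hf : f.IsMonicOfDegree n)
    (hg : g.IsMonicOfDegree n) (u : R) : (AffineMap.homothety f u g).IsMonicOfDegree n := by
  rw [isMonicOfDegree_iff] at hf hg ⊢
  rw [AffineMap.homothety_apply, vsub_eq_sub, vadd_eq_add]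
  refine ⟨natDegree_add_le_of_degree_le ?_ hf.1, by simp [hf.2, hg.2]⟩
  exact (natDegree_smul_le _ _).trans ((natDegree_sub_le_of_le hg.1 hf.1).trans_eq (max_self n))

lemma isMonicOfDegree_homothety_iff {f g : R[X]} {n : ℕ} (hf : f.IsMonicOfDegree n) (u : Rˣ) :
    (AffineMap.homothety f (u : R) g).IsMonicOfDegree n ↔ g.IsMonicOfDegree n := by
  refine ⟨fun h => ?_, fun hg => isMonicOfDegree_homothety hf hg _⟩
  simpa [← AffineMap.homothety_mul_apply] using isMonicOfDegree_homothety hf h (↑u⁻¹ : R)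

lemma natCard_resultantFiber_pow_mul (n : ℕ) (u : Rˣ) (c : R) :
    Nat.card (resultantFiber R n (u ^ n * c)) = Nat.card (resultantFiber R n c) := by
  let dilation : R[X] × R[X] ≃ R[X] × R[X] :=
    (Equiv.refl _).prodShear fun f => (AffineEquiv.homothetyUnitsMulHom f u).toEquiv
  refine (Nat.card_congr (dilation.subtypeEquiv fun ⟨f, g⟩ => and_congr_right fun hf => ?_)).symm
  change _ ↔ (AffineMap.homothety f (u : R) g).IsMonicOfDegree n ∧
    f.resultant (AffineMap.homothety f (u : R) g) n n = u ^ n * c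
  rw [isMonicOfDegree_homothety_iff hf, resultant_homothety hf.natDegree_eq.le,
    (u.isUnit.pow n).mul_right_inj]

end Resultant

lemma natCard_isMonicOfDegree (R : Type*) [Ring R] [Nontrivial R] (n : ℕ) :
    Nat.card {p : R[X] | p.IsMonicOfDegree n} = Nat.card R ^ n := by
  have toCoeffs : {p : R[X] | p.IsMonicOfDegree n} ≃ (Fin n → R) :=
    (Equiv.subtypeEquivRight fun p => (isMonicOfDegree_iff' p n).trans and_comm).trans
      ((monicEquivDegreeLT n).trans (degreeLTEquiv R n).toEquiv)
  rw [Nat.card_congr toCoeffs, Nat.card_fun, Nat.card_fin]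

instance finite_isMonicOfDegree (R : Type*) [Ring R] [Nontrivial R] [Finite R] (n : ℕ) :
    Finite {p : R[X] | p.IsMonicOfDegree n} :=
  Nat.finite_of_card_ne_zero (natCard_isMonicOfDegree R n ▸ pow_ne_zero n Nat.card_pos.ne')

instance finite_coprimeMonicPairs (R : Type*) [CommRing R] [Nontrivial R] [Finite R] (n : ℕ) :
    Finite (coprimeMonicPairs R n) :=
  (((Set.toFinite {p : R[X] | p.IsMonicOfDegree n}).prod
    (Set.toFinite {p | p.IsMonicOfDegree n})).subset fun _ hp => ⟨hp.1, hp.2.1⟩).to_subtype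

instance finite_resultantFiber (R : Type*) [CommRing R] [Nontrivial R] [Finite R] (n : ℕ)
    (c : R) : Finite (resultantFiber R n c) :=
  (((Set.toFinite {p : R[X] | p.IsMonicOfDegree n}).prod
    (Set.toFinite {p | p.IsMonicOfDegree n})).subset fun _ hp => ⟨hp.1, hp.2.1⟩).to_subtype

section CommonFactor

lemma dvd_of_mul_eq_mul_of_isCoprime {R : Type*} [CommSemiring R] {a b a' b' h h' : R}
    (ha : h * a = h' * a') (hb : h * b = h' * b') (hcop : IsCoprime a' b') : h ∣ h' := by
  obtain ⟨u, v, huv⟩ := hcop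
  refine ⟨u * a + v * b, ?_⟩
  calc h' = h' * (u * a' + v * b') := by rw [huv, mul_one]
    _ = u * (h' * a') + v * (h' * b') := by ring
    _ = h * (u * a + v * b) := by rw [← ha, ← hb]; ring

lemma eq_of_monic_mul_eq_mul_of_isCoprime {R : Type*} [CommRing R] [IsDomain R]
    {a b a' b' h h' : R[X]} (hm : h.Monic) (hm' : h'.Monic) (hcop : IsCoprime a b)
    (hcop' : IsCoprime a' b') (ha : h * a = h' * a') (hb : h * b = h' * b') :
    h = h' ∧ a = a' ∧ b = b' := by
  obtain rfl : h = h' := eq_of_monic_of_associated hm hm' <|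
    associated_of_dvd_dvd (dvd_of_mul_eq_mul_of_isCoprime ha hb hcop')
      (dvd_of_mul_eq_mul_of_isCoprime ha.symm hb.symm hcop)
  exact ⟨rfl, mul_left_cancel₀ hm.ne_zero ha, mul_left_cancel₀ hm.ne_zero hb⟩

variable {F : Type*} [Field F]

lemma exists_monic_mul_isCoprime {f : F[X]} (hf : f ≠ 0) (g : F[X]) :
    ∃ h a b : F[X], h.Monic ∧ f = h * a ∧ g = h * b ∧ IsCoprime a b := by
  classical
  let := EuclideanDomain.gcdMonoid F[X]
  obtain ⟨a, b, ha, hb, hunit⟩ := extract_gcd f g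
  have hd : gcd f g ≠ 0 := gcd_ne_zero_of_left hf
  generalize gcd f g = d at ha hb hd
  have hlc : IsUnit (C d.leadingCoeff) := isUnit_C.mpr (leadingCoeff_ne_zero.mpr hd).isUnit
  have hinv : C d.leadingCoeff⁻¹ * C d.leadingCoeff = 1 := by
    rw [← C_mul, inv_mul_cancel₀ (leadingCoeff_ne_zero.mpr hd), C_1]
  refine ⟨d * C d.leadingCoeff⁻¹, C d.leadingCoeff * a, C d.leadingCoeff * b,
    monic_mul_leadingCoeff_inv hd, ?_, ?_,
    (isCoprime_mul_unit_left hlc a b).mpr ((gcd_isUnit_iff a b).mp hunit)⟩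
  · linear_combination ha - d * a * hinv
  · linear_combination hb - d * b * hinv

open Finset in
lemma bijOn_mul_coprimeMonicPairs (n : ℕ) :
    Set.BijOn (fun x : F[X] × F[X] × F[X] => (x.1 * x.2.1, x.1 * x.2.2))
      (⋃ d : antidiagonal n, {h | h.IsMonicOfDegree d.1.1} ×ˢ coprimeMonicPairs F d.1.2)
      ({f | f.IsMonicOfDegree n} ×ˢ {g | g.IsMonicOfDegree n}) := by
  refine ⟨?_, ?_, ?_⟩
  · rintro ⟨h, a, b⟩ hx
    obtain ⟨⟨d, hd⟩, hh, ha, hb, -⟩ := Set.mem_iUnion.mp hx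
    rw [← mem_antidiagonal.mp hd]
    exact ⟨hh.mul ha, hh.mul hb⟩
  · rintro ⟨h, a, b⟩ hx ⟨h', a', b'⟩ hx' heq
    obtain ⟨_, hh, -, -, hcop⟩ := Set.mem_iUnion.mp hx
    obtain ⟨_, hh', -, -, hcop'⟩ := Set.mem_iUnion.mp hx'
    obtain ⟨rfl, rfl, rfl⟩ := eq_of_monic_mul_eq_mul_of_isCoprime hh.monic hh'.monic hcop hcop'
      (congrArg Prod.fst heq) (congrArg Prod.snd heq)
    rfl
  · rintro ⟨f, g⟩ ⟨hf, hg⟩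
    obtain ⟨h, a, b, hm, rfl, rfl, hcop⟩ := exists_monic_mul_isCoprime hf.ne_zero g
    have hle : h.natDegree ≤ n := hf.natDegree_eq ▸ natDegree_le_of_dvd ⟨a, rfl⟩ hf.ne_zero
    have hh : h.IsMonicOfDegree h.natDegree := ⟨rfl, hm⟩
    rw [← Nat.add_sub_cancel' hle] at hf hg
    exact ⟨(h, a, b), Set.mem_iUnion.mpr ⟨⟨(h.natDegree, n - h.natDegree),
      mem_antidiagonal.mpr (Nat.add_sub_cancel' hle)⟩,
      hh, hh.of_mul_left hf, hh.of_mul_left hg, hcop⟩, rfl⟩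

variable (F) [Finite F]

open Finset in
lemma sum_antidiagonal_natCard_coprimeMonicPairs (n : ℕ) :
    ∑ d ∈ antidiagonal n, Nat.card F ^ d.1 * Nat.card (coprimeMonicPairs F d.2) =
      Nat.card F ^ (2 * n) := by
  have hdisj : Pairwise (Function.onFun Disjoint fun d : antidiagonal n =>
      {h : F[X] | h.IsMonicOfDegree d.1.1} ×ˢ coprimeMonicPairs F d.1.2) := by
    intro d e hne
    refine Set.disjoint_left.mpr fun x hd he => hne (HasAntidiagonal.antidiagonal_subtype_ext ?_)
    exact hd.1.natDegree_eq.symm.trans he.1.natDegree_eq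
  have hcard := Nat.card_congr ((bijOn_mul_coprimeMonicPairs (F := F) n).equiv _)
  rw [Nat.card_congr (Set.unionEqSigmaOfDisjoint hdisj), Nat.card_sigma] at hcard
  simp only [Nat.card_congr (Equiv.Set.prod _ _), Nat.card_prod, natCard_isMonicOfDegree] at hcard
  rw [← sum_coe_sort, hcard, ← pow_add, two_mul]

open Finset in
lemma natCard_coprimeMonicPairs_succ (n : ℕ) :
    Nat.card (coprimeMonicPairs F (n + 1)) = (Nat.card F - 1) * Nat.card F ^ (2 * n + 1) := by
  have hrec : Nat.card (coprimeMonicPairs F (n + 1)) + Nat.card F ^ (2 * n + 1) =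
      Nat.card F ^ (2 * n + 2) := by
    calc _ = ∑ d ∈ antidiagonal (n + 1),
          Nat.card F ^ d.1 * Nat.card (coprimeMonicPairs F d.2) := by
          simp only [Nat.sum_antidiagonal_succ, pow_zero, one_mul, pow_succ', mul_assoc,
            ← mul_sum, sum_antidiagonal_natCard_coprimeMonicPairs]
      _ = _ := sum_antidiagonal_natCard_coprimeMonicPairs F (n + 1)
  rw [Nat.eq_sub_of_add_eq hrec, Nat.sub_one_mul, ← pow_succ']

end CommonFactor

section FiniteField

variable {F : Type*} [Field F]

lemma iUnion_resultantFiber_units (n : ℕ) :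
    ⋃ c : Fˣ, resultantFiber F n c = coprimeMonicPairs F n := by
  ext ⟨f, g⟩
  have hcop (hf : f.IsMonicOfDegree n) (hg : g.IsMonicOfDegree n) :
      IsUnit (f.resultant g n n) ↔ IsCoprime f g := by
    have := resultant_eq_zero_iff (f := f) (g := g)
    rw [hf.natDegree_eq, hg.natDegree_eq] at this
    simp [this, hf.ne_zero]
  simp only [Set.mem_iUnion, resultantFiber, coprimeMonicPairs, Set.mem_ofPred_eq, exists_and_left]
  refine and_congr_right fun hf => and_congr_right fun hg => ?_
  rw [← hcop hf hg]
  exact exists_congr fun _ => eq_comm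

lemma resultantAC_eq_algebraMap_resultant {f g : F[X]} {n : ℕ} (hf : f.IsMonicOfDegree n)
    (hg : g.natDegree ≤ n) :
    resultantAC f g = algebraMap F (AlgebraicClosure F) (f.resultant g n n) := by
  let φ := algebraMap F (AlgebraicClosure F)
  have h := resultant_eq_prod_eval (f.map φ) (g.map φ) n (natDegree_map_le.trans hg)
    (IsAlgClosed.splits _)
  rw [(hf.monic.map φ).leadingCoeff, one_pow, one_mul, natDegree_map, hf.natDegree_eq,
    resultant_map_map] at h
  exact h.symm

lemma resPairs_eq_resultantFiber_one (n : ℕ) : ResPairs F n = resultantFiber F n 1 := by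
  ext ⟨f, g⟩
  change f.Monic ∧ f.natDegree = n ∧ g.Monic ∧ g.natDegree = n ∧ resultantAC f g = 1 ↔
    f.IsMonicOfDegree n ∧ g.IsMonicOfDegree n ∧ f.resultant g n n = 1
  have hres (hf : f.IsMonicOfDegree n) (hg : g.IsMonicOfDegree n) :
      resultantAC f g = 1 ↔ f.resultant g n n = 1 := by
    rw [resultantAC_eq_algebraMap_resultant hf hg.natDegree_eq.le,
      map_eq_one_iff _ (algebraMap F (AlgebraicClosure F)).injective]
  grind [isMonicOfDegree_iff']

lemma natCard_resultantFiber_eq_of_coprime {n : ℕ} (hn : (Nat.card F - 1).Coprime n) (c : Fˣ) :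
    Nat.card (resultantFiber F n c) = Nat.card (resultantFiber F n 1) := by
  rw [← Nat.card_units] at hn
  obtain ⟨u, rfl⟩ := (powCoprime hn).surjective c
  simpa using natCard_resultantFiber_pow_mul n u 1

variable (F) [Finite F]

lemma sum_natCard_resultantFiber_units (n : ℕ) [Fintype Fˣ] :
    ∑ c : Fˣ, Nat.card (resultantFiber F n c) = Nat.card (coprimeMonicPairs F n) := by
  have hdisj : Pairwise (Function.onFun Disjoint fun c : Fˣ => resultantFiber F n c) :=
    fun c d hne => Set.disjoint_left.mpr fun _ hc hd => hne (Units.ext (hc.2.2.symm.trans hd.2.2))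
  rw [← iUnion_resultantFiber_units, Nat.card_congr (Set.unionEqSigmaOfDisjoint hdisj),
    Nat.card_sigma]

end FiniteField

theorem stmt_3_general (F : Type*) [Field F] [Finite F] {n : ℕ} (hn : 1 ≤ n)
    (hcop : (Nat.card F - 1).Coprime n) (c : Fˣ) :
    Nat.card (resultantFiber F n c) = Nat.card F ^ (2 * n - 1) := by
  have := Fintype.ofFinite Fˣ
  obtain ⟨m, rfl⟩ := Nat.exists_eq_add_of_le' hn
  have hsum : (Nat.card F - 1) * Nat.card (resultantFiber F (m + 1) 1) =
      (Nat.card F - 1) * Nat.card F ^ (2 * m + 1) := by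
    rw [← natCard_coprimeMonicPairs_succ, ← sum_natCard_resultantFiber_units]
    simp only [natCard_resultantFiber_eq_of_coprime hcop, Finset.sum_const, Finset.card_univ,
      smul_eq_mul, ← Nat.card_units, Nat.card_eq_fintype_card]
  have hpos : 0 < Nat.card F - 1 := Nat.sub_pos_of_lt Finite.one_lt_card
  rw [natCard_resultantFiber_eq_of_coprime hcop]
  exact Nat.eq_of_mul_eq_mul_left hpos hsum

/-- if `gcd(q-1, n) = 1` then `|Res_n(F_q)| = q^{2n-1}`. -/
theorem stmt_3 (F : Type*) [Field F] [Fintype F] (q : ℕ) (hq : Fintype.card F = q)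
    (n : ℕ) (hn : 1 ≤ n) (hgcd : Nat.gcd (q - 1) n = 1) :
    Nat.card (ResPairs F n) = q ^ (2 * n - 1) := by
  subst hq
  rw [← Nat.card_eq_fintype_card] at hgcd ⊢
  rw [resPairs_eq_resultantFiber_one]
  exact stmt_3_general F hn hgcd 1
end

section
/- For every integer n ≥ 1 and every prime power q with q ≡ 1 (mod n), the cardinality of Res_n(F_q) equals Σ_{d | n} ϕ(n/d) · q^{n−1+d}, where the sum ranges over all divisors d of n. -/
open Polynomial

/-
For monic `φ`, `ψ ↦ Res(φ, ψ)` is the norm of the `F_q`-algebra `F_q[X] ⧸ (φ)`. On units it is a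
homomorphism to the cyclic group `F_qˣ`, so `φ` has `|(F_q[X] ⧸ (φ))ˣ| · [F_qˣ : im] / (q - 1)`
partners. Since the norm of a finite field extension is onto, the image for `φ = ∏ pᵢ ^ eᵢ` is
generated by the `eᵢ`-th powers; hence a divisor `m` of `q - 1` divides the index iff `φ` is an
`m`-th power.

Writing the index as `∑ ϕ(m)` over its divisors `m` and exchanging sums leaves, for each common
divisor `m` of `n` and `q - 1`, the sum of
`|(F_q[X] ⧸ (g ^ m))ˣ| = q ^ (n - n / m) · |(F_q[X] ⧸ (g))ˣ|` over monic `g` of degree `d = n / m`,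
that is, a count of coprime pairs of monics of degree `d`. Splitting all pairs by their gcd gives
`(q - 1) q ^ (2 d - 1)` such pairs.
-/

section Norm

variable {k : Type*} [Field k]

theorem det_aeval_eq_prod_roots_charpoly [IsAlgClosed k] {ι : Type*} [Fintype ι] [DecidableEq ι]
    (M : Matrix ι ι k) (f : k[X]) :
    (aeval M f).det = (M.charpoly.roots.map f.eval).prod := by
  have card_roots : Multiset.card M.charpoly.roots = Fintype.card ι := by
    rw [← (IsAlgClosed.splits M.charpoly).natDegree_eq_card_roots, M.charpoly_natDegree_eq_dim]
  have hf : f ∈ Submonoid.closure ({C a | a : k} ∪ {X + C a | a : k}) := IsAlgClosed.splits f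
  induction hf using Submonoid.closure_induction with
  | one => simp
  | mul f g _ _ hf hg => simp [hf, hg]
  | mem f hf =>
    rcases hf with ⟨a, rfl⟩ | ⟨a, rfl⟩
    · simp [Matrix.algebraMap_eq_diagonal, card_roots]
    · have heval := M.eval_charpoly (-a)
      rw [(IsAlgClosed.splits M.charpoly).eval_eq_prod_roots_of_monic M.charpoly_monic] at heval
      have hneg : aeval M (X + C a) = -(Matrix.scalar ι (-a) - M) := by
        rw [map_neg, map_add, aeval_X, aeval_C]
        change M + Matrix.scalar ι a = _
        abel
      rw [hneg, Matrix.det_neg, ← heval, ← card_roots, ← Multiset.card_map,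
        ← Multiset.prod_map_neg, Multiset.map_map]
      simp [add_comm]

theorem algebraMap_norm_mk_eq_resultantAC {φ : k[X]} (hφ : φ.Monic) (ψ : k[X]) :
    algebraMap k (AlgebraicClosure k) (Algebra.norm k (AdjoinRoot.mk φ ψ)) =
      resultantAC φ ψ := by
  let pb := AdjoinRoot.powerBasis' hφ
  let M := Algebra.leftMulMatrix pb.basis pb.gen
  let L := AlgebraicClosure k
  have charpoly_M : M.charpoly = φ := by
    rw [charpoly_leftMulMatrix, AdjoinRoot.powerBasis'_gen, AdjoinRoot.minpoly_root hφ.ne_zero,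
      hφ.leadingCoeff, inv_one, map_one, mul_one]
  have norm_eq_det : Algebra.norm k (AdjoinRoot.mk φ ψ) = (aeval M ψ).det := by
    rw [← AdjoinRoot.aeval_eq, ← AdjoinRoot.powerBasis'_gen hφ,
      Algebra.norm_eq_matrix_det pb.basis, ← aeval_algHom_apply]
  have map_aeval_M : (algebraMap k L).mapMatrix (aeval M ψ) =
      aeval ((algebraMap k L).mapMatrix M) (ψ.map (algebraMap k L)) :=
    map_aeval_eq_aeval_map (by ext1; simp [Matrix.algebraMap_eq_diagonal, Matrix.diagonal_map]) ψ M
  rw [norm_eq_det, RingHom.map_det, map_aeval_M, det_aeval_eq_prod_roots_charpoly,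
    RingHom.mapMatrix_apply, Matrix.charpoly_map, charpoly_M]
  rfl

theorem norm_mk_mul {φ φ' : k[X]} (hφ : φ.Monic) (hφ' : φ'.Monic) (ψ : k[X]) :
    Algebra.norm k (AdjoinRoot.mk (φ * φ') ψ) =
      Algebra.norm k (AdjoinRoot.mk φ ψ) * Algebra.norm k (AdjoinRoot.mk φ' ψ) := by
  apply (algebraMap k (AlgebraicClosure k)).injective
  rw [map_mul, algebraMap_norm_mk_eq_resultantAC (hφ.mul hφ'),
    algebraMap_norm_mk_eq_resultantAC hφ, algebraMap_norm_mk_eq_resultantAC hφ',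
    resultantAC, Polynomial.map_mul, roots_mul ((hφ.map _).mul (hφ'.map _)).ne_zero,
    Multiset.map_add, Multiset.prod_add]
  rfl

theorem norm_mk_pow {φ : k[X]} (hφ : φ.Monic) (ψ : k[X]) (m : ℕ) :
    Algebra.norm k (AdjoinRoot.mk (φ ^ m) ψ) = Algebra.norm k (AdjoinRoot.mk φ ψ) ^ m := by
  induction m with
  | zero =>
    apply (algebraMap k (AlgebraicClosure k)).injective
    rw [pow_zero, pow_zero, algebraMap_norm_mk_eq_resultantAC monic_one]
    simp [resultantAC]
  | succ m ih => rw [pow_succ, pow_succ, norm_mk_mul (hφ.pow m) hφ, ih]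

theorem norm_algebraMap_adjoinRoot {φ : k[X]} (hφ : φ.Monic) (c : k) :
    Algebra.norm k (algebraMap k (AdjoinRoot φ) c) = c ^ φ.natDegree := by
  rw [Algebra.norm_algebraMap_of_basis (AdjoinRoot.powerBasis' hφ).basis, Fintype.card_fin,
    AdjoinRoot.powerBasis'_dim]

end Norm

section CyclicGroup

variable {G : Type*} [CommGroup G] [IsCyclic G] [Finite G]

theorem dvd_index_iff_le_range_powMonoidHom {m : ℕ} (hm : m ∣ Nat.card G) (H : Subgroup G) :
    m ∣ H.index ↔ H ≤ (powMonoidHom m : G →* G).range := by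
  constructor
  · intro hmH x hx
    have range_eq_ker : (powMonoidHom m : G →* G).range =
        (powMonoidHom (Nat.card G / m) : G →* G).ker := by
      refine Subgroup.eq_of_le_of_card_ge ?_ ?_
      · rintro _ ⟨y, rfl⟩
        rw [MonoidHom.mem_ker, powMonoidHom_apply, powMonoidHom_apply, ← pow_mul,
          Nat.mul_div_cancel' hm, pow_card_eq_one']
      · rw [IsCyclic.card_powMonoidHom_ker, IsCyclic.card_powMonoidHom_range,
          Nat.gcd_eq_right hm, Nat.gcd_eq_right (Nat.div_dvd_of_dvd hm)]
    have card_dvd : Nat.card H ∣ Nat.card G / m := by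
      obtain ⟨j, hj⟩ := hmH
      have hm0 : 0 < m := Nat.pos_of_dvd_of_pos hm Nat.card_pos
      rw [← H.index_mul_card, hj, mul_assoc, Nat.mul_div_cancel_left _ hm0]
      exact dvd_mul_left _ _
    rw [range_eq_ker, MonoidHom.mem_ker, powMonoidHom_apply]
    exact orderOf_dvd_iff_pow_eq_one.1 ((H.orderOf_dvd_natCard hx).trans card_dvd)
  · intro hH
    have hdvd := Subgroup.index_dvd_of_le hH
    rwa [IsCyclic.index_powMonoidHom_range, Nat.gcd_eq_right hm] at hdvd

theorem dvd_of_range_powMonoidHom_le {m e : ℕ} (hm : m ∣ Nat.card G)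
    (h : (powMonoidHom e : G →* G).range ≤ (powMonoidHom m : G →* G).range) : m ∣ e := by
  have hdvd := (dvd_index_iff_le_range_powMonoidHom hm _).2 h
  rw [IsCyclic.index_powMonoidHom_range] at hdvd
  exact hdvd.trans (Nat.gcd_dvd_right _ _)

end CyclicGroup

section PerfectPowers

open UniqueFactorizationMonoid

theorem exists_pow_associated_of_dvd_multiplicity {α : Type*} [CommMonoidWithZero α]
    [UniqueFactorizationMonoid α] {x : α} (hx : x ≠ 0) {m : ℕ}
    (h : ∀ p, Irreducible p → m ∣ multiplicity p x) : ∃ y, Associated (y ^ m) x := by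
  classical
  let := UniqueFactorizationMonoid.strongNormalizationMonoid (α := α)
  have dvd_count : ∀ p ∈ normalizedFactors x, m ∣ (normalizedFactors x).count p := by
    intro p hp
    have hirr := irreducible_of_normalized_factor p hp
    have hcount := emultiplicity_eq_count_normalizedFactors hirr hx
    rw [normalize_normalized_factor p hp] at hcount
    rw [← multiplicity_eq_of_emultiplicity_eq_some hcount]
    exact h p hirr
  obtain ⟨s, hs⟩ := Multiset.exists_smul_of_dvd_count _ dvd_count
  refine ⟨s.prod, ?_⟩
  rw [← Multiset.prod_nsmul, ← hs]
  exact prod_normalizedFactors hx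

end PerfectPowers

section UnitNorm

variable {k : Type*} [Field k]

theorem isUnit_of_isUnit_norm {A : Type*} [CommRing A] [Algebra k A] [Module.Finite k A]
    {x : A} (h : IsUnit (Algebra.norm k x)) : IsUnit x := by
  rw [Algebra.norm_apply, ← LinearMap.isUnit_iff_isUnit_det] at h
  exact Algebra.lmul_isUnit_iff.1 h

/-- The resultant `ψ ↦ Res(φ, ψ)`, as a homomorphism on the units of `k[X] ⧸ (φ)`. -/
noncomputable abbrev unitNorm (φ : k[X]) : (AdjoinRoot φ)ˣ →* kˣ := Units.map (Algebra.norm k)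

theorem mem_range_unitNorm {φ : k[X]} (hφ : φ.Monic) {c : kˣ} :
    c ∈ (unitNorm φ).range ↔ ∃ ψ, Algebra.norm k (AdjoinRoot.mk φ ψ) = c := by
  constructor
  · rintro ⟨u, rfl⟩
    obtain ⟨ψ, hψ⟩ := AdjoinRoot.mk_surjective (u : AdjoinRoot φ)
    exact ⟨ψ, by rw [hψ]; rfl⟩
  · rintro ⟨ψ, hψ⟩
    have := (AdjoinRoot.powerBasis' hφ).finite
    have hu : IsUnit (AdjoinRoot.mk φ ψ) := isUnit_of_isUnit_norm (hψ ▸ c.isUnit)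
    exact ⟨hu.unit, Units.ext hψ⟩

theorem range_powMonoidHom_natDegree_le_range_unitNorm {φ : k[X]} (hφ : φ.Monic) :
    (powMonoidHom φ.natDegree : kˣ →* kˣ).range ≤ (unitNorm φ).range := by
  rintro _ ⟨c, rfl⟩
  exact (mem_range_unitNorm hφ).2 ⟨C (c : k), norm_algebraMap_adjoinRoot hφ _⟩

theorem range_unitNorm_pow_le_range_powMonoidHom {φ : k[X]} (hφ : φ.Monic) {m : ℕ} (hm : m ≠ 0) :
    (unitNorm (φ ^ m)).range ≤ (powMonoidHom m : kˣ →* kˣ).range := by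
  intro c hc
  obtain ⟨ψ, hψ⟩ := (mem_range_unitNorm (hφ.pow m)).1 hc
  rw [norm_mk_pow hφ] at hψ
  have hne : Algebra.norm k (AdjoinRoot.mk φ ψ) ≠ 0 := by
    rintro h
    exact c.ne_zero (by rw [← hψ, h, zero_pow hm])
  exact ⟨Units.mk0 _ hne, Units.ext hψ⟩

variable [Finite k]

theorem range_powMonoidHom_le_range_unitNorm {p r : k[X]} (hp : p.Monic) (hirr : Irreducible p)
    (hr : r.Monic) (hpr : IsCoprime p r) (e : ℕ) :
    (powMonoidHom e : kˣ →* kˣ).range ≤ (unitNorm (p ^ e * r)).range := by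
  rintro _ ⟨c, rfl⟩
  have : Fact (Irreducible p) := ⟨hirr⟩
  have := (AdjoinRoot.powerBasis' hp).finite
  have : Finite (AdjoinRoot p) := Module.finite_of_finite k
  obtain ⟨x, hx⟩ := FiniteField.norm_surjective k (AdjoinRoot p) (c : k)
  obtain ⟨a, rfl⟩ := AdjoinRoot.mk_surjective x
  obtain ⟨s, t, hst⟩ := hpr
  let ψ := a * (t * r) + s * p
  have mod_p : AdjoinRoot.mk p ψ = AdjoinRoot.mk p a :=
    AdjoinRoot.mk_eq_mk.2 ⟨s * (1 - a), by linear_combination a * hst⟩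
  have mod_r : AdjoinRoot.mk r ψ = 1 := by
    rw [← map_one (AdjoinRoot.mk r)]
    exact AdjoinRoot.mk_eq_mk.2 ⟨(a - 1) * t, by linear_combination hst⟩
  refine (mem_range_unitNorm ((hp.pow e).mul hr)).2 ⟨ψ, ?_⟩
  rw [norm_mk_mul (hp.pow e) hr, norm_mk_pow hp, mod_p, mod_r, hx, map_one, mul_one]
  rfl

theorem range_unitNorm_le_range_powMonoidHom_iff {φ : k[X]} (hφ : φ.Monic) {m : ℕ}
    (hm : m ∣ Nat.card k - 1) :
    (unitNorm φ).range ≤ (powMonoidHom m : kˣ →* kˣ).range ↔ ∃ g : k[X], g.Monic ∧ g ^ m = φ := by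
  rw [← Nat.card_units] at hm
  have hm0 : m ≠ 0 := (Nat.pos_of_dvd_of_pos hm Nat.card_pos).ne'
  constructor
  · intro hle
    have dvd_multiplicity (p : k[X]) (hirr : Irreducible p) : m ∣ multiplicity p φ := by
      classical
      rw [multiplicity_eq_of_associated_left (normalize_associated p)]
      have hp : (normalize p).Monic := monic_normalize hirr.ne_zero
      have hirr' : Irreducible (normalize p) := (normalize_associated p).symm.irreducible hirr
      obtain ⟨r, hr, hpr⟩ := (FiniteMultiplicity.of_not_isUnit hirr'.not_isUnit
        hφ.ne_zero).exists_eq_pow_mul_and_not_dvd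
      have hr' : r.Monic := (hp.pow _).of_mul_monic_left (hr ▸ hφ)
      rw [hr] at hle
      exact dvd_of_range_powMonoidHom_le hm ((range_powMonoidHom_le_range_unitNorm hp hirr' hr'
        (hirr'.coprime_iff_not_dvd.2 hpr) _).trans hle)
    obtain ⟨y, hy⟩ := exists_pow_associated_of_dvd_multiplicity hφ.ne_zero dvd_multiplicity
    classical
    have hy0 : y ≠ 0 := by
      rintro rfl
      rw [zero_pow hm0] at hy
      exact hφ.ne_zero ((associated_zero_iff_eq_zero _).1 hy.symm)
    refine ⟨normalize y, monic_normalize hy0, ?_⟩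
    exact eq_of_monic_of_associated ((monic_normalize hy0).pow m) hφ
      (((normalize_associated y).pow_pow).trans hy)
  · rintro ⟨g, hg, rfl⟩
    exact range_unitNorm_pow_le_range_powMonoidHom hg hm0

end UnitNorm

section MonicsOfDegree

variable (R : Type*) [CommRing R] [Nontrivial R] [Finite R]

theorem finite_setOf_monic_natDegree_eq (n : ℕ) : {p : R[X] | p.Monic ∧ p.natDegree = n}.Finite :=
  Set.finite_coe_iff.1 (Finite.of_equiv (Fin n → R)
    ((monicEquivDegreeLT n).trans (degreeLTEquiv R n).toEquiv).symm)

/-- The finset of monic polynomials of degree `n` over a finite ring. -/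
noncomputable def monicsOfDegree (n : ℕ) : Finset R[X] :=
  (finite_setOf_monic_natDegree_eq R n).toFinset

open Classical in
/-- The finset of pairs of coprime monic polynomials of degree `n` over a finite ring. -/
noncomputable def coprimePairs (n : ℕ) : Finset (R[X] × R[X]) :=
  {x ∈ monicsOfDegree R n ×ˢ monicsOfDegree R n | IsCoprime x.1 x.2}

variable {R}

theorem mem_monicsOfDegree {n : ℕ} {p : R[X]} :
    p ∈ monicsOfDegree R n ↔ p.Monic ∧ p.natDegree = n :=
  Set.Finite.mem_toFinset _

theorem mem_coprimePairs {n : ℕ} {x : R[X] × R[X]} :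
    x ∈ coprimePairs R n ↔
      (x.1 ∈ monicsOfDegree R n ∧ x.2 ∈ monicsOfDegree R n) ∧ IsCoprime x.1 x.2 := by
  classical
  rw [coprimePairs, Finset.mem_filter, Finset.mem_product]

theorem card_monicsOfDegree (n : ℕ) : (monicsOfDegree R n).card = Nat.card R ^ n := by
  rw [monicsOfDegree, ← Set.ncard_eq_toFinset_card _ (finite_setOf_monic_natDegree_eq R n),
    ← Nat.card_coe_set_eq]
  calc Nat.card {p : R[X] | p.Monic ∧ p.natDegree = n}
    _ = Nat.card (Fin n → R) :=
      Nat.card_congr ((monicEquivDegreeLT n).trans (degreeLTEquiv R n).toEquiv)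
    _ = Nat.card R ^ n := by rw [Nat.card_fun, Nat.card_fin]

theorem mul_mem_monicsOfDegree {i j : ℕ} {p q : R[X]} (hp : p ∈ monicsOfDegree R i)
    (hq : q ∈ monicsOfDegree R j) : p * q ∈ monicsOfDegree R (i + j) := by
  rw [mem_monicsOfDegree] at *
  exact ⟨hp.1.mul hq.1, by rw [hp.1.natDegree_mul hq.1, hp.2, hq.2]⟩

theorem pow_mem_monicsOfDegree {d : ℕ} {p : R[X]} (hp : p ∈ monicsOfDegree R d) (m : ℕ) :
    p ^ m ∈ monicsOfDegree R (m * d) := by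
  rw [mem_monicsOfDegree] at *
  exact ⟨hp.1.pow m, by rw [hp.1.natDegree_pow, hp.2]⟩

theorem mem_monicsOfDegree_of_mul_mem {i j : ℕ} {p q : R[X]} (hp : p ∈ monicsOfDegree R i)
    (hpq : p * q ∈ monicsOfDegree R (i + j)) : q ∈ monicsOfDegree R j := by
  rw [mem_monicsOfDegree] at *
  have hq : q.Monic := hp.1.of_mul_monic_left hpq.1
  exact ⟨hq, by have := hp.1.natDegree_mul hq; omega⟩

end MonicsOfDegree

section CoprimePairs

open scoped Finset
open Finset.HasAntidiagonal (antidiagonal mem_antidiagonal)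

variable {k : Type*} [Field k]

theorem monic_gcd [DecidableEq k] {x : k[X]} (hx : x ≠ 0) (y : k[X]) : (gcd x y).Monic := by
  rw [← normalize_gcd]
  exact monic_normalize fun h => hx ((gcd_eq_zero_iff x y).1 h).1

theorem gcd_mul_mul_of_isCoprime [DecidableEq k] {h a b : k[X]} (hh : h.Monic)
    (hab : IsCoprime a b) : gcd (h * a) (h * b) = h := by
  rw [gcd_mul_left, hh.normalize_eq_self, ← normalize_gcd,
    normalize_eq_one.2 ((gcd_isUnit_iff a b).2 hab), mul_one]

variable [Finite k]

theorem card_filter_natDegree_gcd [DecidableEq k] (i j : ℕ) :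
    #{x ∈ monicsOfDegree k (i + j) ×ˢ monicsOfDegree k (i + j) | (gcd x.1 x.2).natDegree = i} =
      Nat.card k ^ i * #(coprimePairs k j) := by
  rw [← card_monicsOfDegree, ← Finset.card_product]
  refine Finset.card_nbij' (fun x => (gcd x.1 x.2, x.1 / gcd x.1 x.2, x.2 / gcd x.1 x.2))
    (fun s => (s.1 * s.2.1, s.1 * s.2.2)) ?_ ?_ ?_ ?_
  · rintro ⟨x, y⟩ hxy
    obtain ⟨hxy, hdeg⟩ := Finset.mem_filter.1 hxy
    obtain ⟨hx, hy⟩ := Finset.mem_product.1 hxy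
    have hg : (gcd x y).Monic := monic_gcd (mem_monicsOfDegree.1 hx).1.ne_zero y
    have hgi : gcd x y ∈ monicsOfDegree k i := mem_monicsOfDegree.2 ⟨hg, hdeg⟩
    refine Finset.mem_product.2 ⟨hgi, mem_coprimePairs.2 ⟨⟨?_, ?_⟩,
      isCoprime_div_gcd_div_gcd_of_gcd_ne_zero hg.ne_zero⟩⟩ <;>
      refine mem_monicsOfDegree_of_mul_mem hgi ?_
    · rwa [EuclideanDomain.mul_div_cancel' hg.ne_zero (gcd_dvd_left x y)]
    · rwa [EuclideanDomain.mul_div_cancel' hg.ne_zero (gcd_dvd_right x y)]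
  · rintro ⟨h, a, b⟩ hs
    obtain ⟨hh, hab⟩ := Finset.mem_product.1 hs
    obtain ⟨⟨ha, hb⟩, hab⟩ := mem_coprimePairs.1 hab
    obtain ⟨hhm, hhi⟩ := mem_monicsOfDegree.1 hh
    refine Finset.mem_filter.2 ⟨Finset.mem_product.2 ⟨mul_mem_monicsOfDegree hh ha,
      mul_mem_monicsOfDegree hh hb⟩, ?_⟩
    rw [gcd_mul_mul_of_isCoprime hhm hab, hhi]
  · rintro ⟨x, y⟩ hxy
    have hx := (Finset.mem_product.1 (Finset.mem_filter.1 hxy).1).1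
    have hg := (monic_gcd (mem_monicsOfDegree.1 hx).1.ne_zero y).ne_zero
    exact Prod.ext (EuclideanDomain.mul_div_cancel' hg (gcd_dvd_left x y))
      (EuclideanDomain.mul_div_cancel' hg (gcd_dvd_right x y))
  · rintro ⟨h, a, b⟩ hs
    obtain ⟨hh, hab⟩ := Finset.mem_product.1 hs
    have hh := (mem_monicsOfDegree.1 hh).1
    simp only [gcd_mul_mul_of_isCoprime hh (mem_coprimePairs.1 hab).2,
      mul_div_cancel_left₀ _ hh.ne_zero]

theorem sum_antidiagonal_card_coprimePairs (d : ℕ) :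
    ∑ ij ∈ antidiagonal d, Nat.card k ^ ij.1 * #(coprimePairs k ij.2) =
      Nat.card k ^ (2 * d) := by
  classical
  let degrees (x : k[X] × k[X]) := ((gcd x.1 x.2).natDegree, d - (gcd x.1 x.2).natDegree)
  have mapsTo : ∀ x ∈ monicsOfDegree k d ×ˢ monicsOfDegree k d,
      degrees x ∈ antidiagonal d := by
    intro x hx
    obtain ⟨hx, hdeg⟩ := mem_monicsOfDegree.1 (Finset.mem_product.1 hx).1
    have hle := natDegree_le_of_dvd (gcd_dvd_left x.1 x.2) hx.ne_zero
    exact mem_antidiagonal.2 (Nat.add_sub_cancel' (hle.trans hdeg.le))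
  calc ∑ ij ∈ antidiagonal d, Nat.card k ^ ij.1 * #(coprimePairs k ij.2)
    _ = ∑ ij ∈ antidiagonal d,
        #{x ∈ monicsOfDegree k d ×ˢ monicsOfDegree k d | degrees x = ij} := by
      refine Finset.sum_congr rfl fun ⟨i, j⟩ hij => ?_
      obtain rfl : i + j = d := mem_antidiagonal.1 hij
      rw [← card_filter_natDegree_gcd]
      congr! 2 with x
      grind
    _ = #(monicsOfDegree k d ×ˢ monicsOfDegree k d) :=
      (Finset.card_eq_sum_card_fiberwise mapsTo).symm
    _ = Nat.card k ^ (2 * d) := by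
      rw [Finset.card_product, card_monicsOfDegree, two_mul, pow_add]

theorem card_coprimePairs_succ (d : ℕ) :
    #(coprimePairs k (d + 1)) = (Nat.card k - 1) * Nat.card k ^ (2 * d + 1) := by
  have hsum := sum_antidiagonal_card_coprimePairs (k := k) (d + 1)
  simp only [Finset.Nat.sum_antidiagonal_succ, pow_zero, one_mul, pow_succ', mul_assoc,
    ← Finset.mul_sum, sum_antidiagonal_card_coprimePairs] at hsum
  rw [Nat.sub_mul, one_mul]
  have pow_even : Nat.card k ^ (2 * (d + 1)) = Nat.card k * Nat.card k ^ (2 * d + 1) := by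
    ring
  have pow_odd : Nat.card k * Nat.card k ^ (2 * d) = Nat.card k ^ (2 * d + 1) := by ring
  omega

end CoprimePairs

section Residues

open scoped Finset

variable {R : Type*} [CommRing R]

theorem isUnit_mk_iff_isCoprime {g ψ : R[X]} :
    IsUnit (AdjoinRoot.mk g ψ) ↔ IsCoprime g ψ := by
  constructor
  · intro h
    obtain ⟨b, hb⟩ := h.exists_right_inv
    obtain ⟨b, rfl⟩ := AdjoinRoot.mk_surjective b
    rw [← map_mul, ← map_one (AdjoinRoot.mk g), AdjoinRoot.mk_eq_mk] at hb
    obtain ⟨c, hc⟩ := hb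
    exact ⟨-c, b, by linear_combination hc⟩
  · rintro ⟨u, v, h⟩
    refine IsUnit.of_mul_eq_one (AdjoinRoot.mk g v) ?_
    rw [← map_mul, ← map_one (AdjoinRoot.mk g), AdjoinRoot.mk_eq_mk]
    exact ⟨-u, by linear_combination h⟩

theorem mk_modByMonicHom_add_mul {g : R[X]} (hg : g.Monic) (a : R[X]) (y : AdjoinRoot g) :
    AdjoinRoot.mk g (AdjoinRoot.modByMonicHom hg y + g * a) = y := by
  rw [map_add, AdjoinRoot.mk_leftInverse hg, map_mul, AdjoinRoot.mk_self, zero_mul, add_zero]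

variable [Finite R]

theorem finite_adjoinRoot {g : R[X]} (hg : g.Monic) : Finite (AdjoinRoot g) :=
  have := (AdjoinRoot.powerBasis' hg).finite
  Module.finite_of_finite R

variable [Nontrivial R]

theorem modByMonicHom_add_mul_mem_monicsOfDegree {g a : R[X]} (hg : g.Monic) {d : ℕ}
    (ha : a ∈ monicsOfDegree R d) (y : AdjoinRoot g) :
    AdjoinRoot.modByMonicHom hg y + g * a ∈ monicsOfDegree R (g.natDegree + d) := by
  obtain ⟨hga, hdeg⟩ := mem_monicsOfDegree.1
    (mul_mem_monicsOfDegree (mem_monicsOfDegree.2 ⟨hg, rfl⟩) ha)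
  have hlt : (AdjoinRoot.modByMonicHom hg y).degree < (g * a).degree := by
    obtain ⟨f, rfl⟩ := AdjoinRoot.mk_surjective y
    refine (degree_modByMonic_lt f hg).trans_le ?_
    rw [degree_eq_natDegree hg.ne_zero, degree_eq_natDegree hga.ne_zero, hdeg]
    exact_mod_cast Nat.le_add_right _ d
  exact mem_monicsOfDegree.2 ⟨hga.add_of_right hlt,
    (natDegree_add_eq_right_of_degree_lt hlt).trans hdeg⟩

open Classical in
theorem card_filter_mk {g : R[X]} (hg : g.Monic) {N : ℕ} (hN : g.natDegree ≤ N)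
    (P : AdjoinRoot g → Prop) :
    #{ψ ∈ monicsOfDegree R N | P (AdjoinRoot.mk g ψ)} =
      Nat.card R ^ (N - g.natDegree) * Nat.card {y // P y} := by
  have := finite_adjoinRoot hg
  have := Fintype.ofFinite (AdjoinRoot g)
  rw [Nat.card_eq_fintype_card (α := {y // P y}), Fintype.card_subtype, ← card_monicsOfDegree,
    ← Finset.card_product]
  refine Finset.card_nbij' (fun ψ => (ψ /ₘ g, AdjoinRoot.mk g ψ))
    (fun x => AdjoinRoot.modByMonicHom hg x.2 + g * x.1) ?_ ?_ ?_ ?_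
  · intro ψ hψ
    obtain ⟨hψ, hP⟩ := Finset.mem_filter.1 hψ
    obtain ⟨hψm, rfl⟩ := mem_monicsOfDegree.1 hψ
    refine Finset.mem_product.2 ⟨mem_monicsOfDegree.2 ⟨?_, natDegree_divByMonic ψ hg⟩,
      Finset.mem_filter.2 ⟨Finset.mem_univ _, hP⟩⟩
    have hdeg : g.degree ≤ ψ.degree := by
      rw [degree_eq_natDegree hg.ne_zero, degree_eq_natDegree hψm.ne_zero]
      exact_mod_cast hN
    rw [Monic, leadingCoeff_divByMonic_of_monic hg hdeg, hψm]
  · rintro ⟨a, y⟩ hay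
    obtain ⟨ha, hy⟩ := Finset.mem_product.1 hay
    refine Finset.mem_filter.2 ⟨?_, ?_⟩
    · simpa only [Nat.add_sub_cancel' hN] using modByMonicHom_add_mul_mem_monicsOfDegree hg ha y
    · rw [mk_modByMonicHom_add_mul]
      exact (Finset.mem_filter.1 hy).2
  · intro ψ _
    exact modByMonic_add_div ψ g
  · rintro ⟨a, y⟩ -
    obtain ⟨f, rfl⟩ := AdjoinRoot.mk_surjective y
    exact Prod.ext (div_modByMonic_unique a (f %ₘ g) hg ⟨rfl, degree_modByMonic_lt f hg⟩).1
      (mk_modByMonicHom_add_mul hg a _)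

open Classical in
theorem card_filter_isCoprime {g : R[X]} (hg : g.Monic) {N : ℕ} (hN : g.natDegree ≤ N) :
    #{ψ ∈ monicsOfDegree R N | IsCoprime g ψ} =
      Nat.card R ^ (N - g.natDegree) * Nat.card (AdjoinRoot g)ˣ := by
  have card_isUnit : Nat.card (AdjoinRoot g)ˣ = Nat.card {y : AdjoinRoot g // IsUnit y} :=
    Nat.card_congr (Equiv.ofInjective _ Units.val_injective)
  rw [card_isUnit, ← card_filter_mk hg hN]
  simp only [isUnit_mk_iff_isCoprime]

theorem card_units_adjoinRoot_pow {g : R[X]} (hg : g.Monic) {m : ℕ} (hm : m ≠ 0) :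
    Nat.card (AdjoinRoot (g ^ m))ˣ =
      Nat.card R ^ (m * g.natDegree - g.natDegree) * Nat.card (AdjoinRoot g)ˣ := by
  classical
  have hdeg : (g ^ m).natDegree = m * g.natDegree := hg.natDegree_pow m
  have h := card_filter_isCoprime (hg.pow m) hdeg.le
  simp only [IsCoprime.pow_left_iff (Nat.pos_of_ne_zero hm), hdeg, Nat.sub_self, pow_zero, one_mul]
    at h
  rw [← h, card_filter_isCoprime hg (Nat.le_mul_of_pos_left _ (Nat.pos_of_ne_zero hm))]

theorem sum_card_units_adjoinRoot (d : ℕ) :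
    ∑ g ∈ monicsOfDegree R d, Nat.card (AdjoinRoot g)ˣ = #(coprimePairs R d) := by
  classical
  rw [coprimePairs, Finset.card_filter, Finset.sum_product]
  refine Finset.sum_congr rfl fun g hg => ?_
  obtain ⟨hgm, rfl⟩ := mem_monicsOfDegree.1 hg
  have hcard := card_filter_isCoprime hgm le_rfl
  rw [Nat.sub_self, pow_zero, one_mul] at hcard
  rw [← hcard, Finset.card_filter]

end Residues

section NormOne

open scoped Finset

variable {k : Type*} [Field k]

theorem card_sub_one_mul_card_ker_unitNorm (φ : k[X]) :
    (Nat.card k - 1) * Nat.card (unitNorm φ).ker =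
      Nat.card (AdjoinRoot φ)ˣ * (unitNorm φ).range.index := by
  rw [← Nat.card_units, ← (unitNorm φ).range.card_mul_index, ← (unitNorm φ).ker.card_mul_index,
    Subgroup.index_ker]
  ring

theorem pow_injOn_monic {m : ℕ} (hm : m ≠ 0) : Set.InjOn (fun g : k[X] => g ^ m) {g | g.Monic} :=
  fun _ hf _ hg h => eq_of_monic_of_associated hf hg <| associated_of_dvd_dvd
    ((UniqueFactorizationMonoid.pow_dvd_pow_iff_dvd hm).1 h.dvd)
    ((UniqueFactorizationMonoid.pow_dvd_pow_iff_dvd hm).1 h.symm.dvd)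

variable [Finite k]

theorem card_filter_norm_mk_eq_one [DecidableEq k] {φ : k[X]} (hφ : φ.Monic) :
    #{ψ ∈ monicsOfDegree k φ.natDegree | Algebra.norm k (AdjoinRoot.mk φ ψ) = 1} =
      Nat.card (unitNorm φ).ker := by
  have := (AdjoinRoot.powerBasis' hφ).finite
  have card_filter := card_filter_mk hφ le_rfl fun y => Algebra.norm k y = 1
  rw [Nat.sub_self, pow_zero, one_mul] at card_filter
  have mem_ker (u : (AdjoinRoot φ)ˣ) :
      u ∈ (unitNorm φ).ker ↔ Algebra.norm k (u : AdjoinRoot φ) = 1 :=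
    Units.ext_iff
  let coe (u : (unitNorm φ).ker) : {y : AdjoinRoot φ // Algebra.norm k y = 1} :=
    ⟨u.1, (mem_ker u.1).1 u.2⟩
  have coe_bijective : Function.Bijective coe := by
    refine ⟨fun u v huv => Subtype.ext (Units.ext (congrArg Subtype.val huv)), fun ⟨y, hy⟩ => ?_⟩
    obtain ⟨u, rfl⟩ := isUnit_of_isUnit_norm (k := k) (hy ▸ isUnit_one)
    exact ⟨⟨u, (mem_ker u).2 hy⟩, rfl⟩
  rw [Nat.card_congr (Equiv.ofBijective coe coe_bijective), ← card_filter]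
  congr

theorem dvd_index_range_unitNorm_iff {φ : k[X]} (hφ : φ.Monic) {m : ℕ} :
    m ∣ (unitNorm φ).range.index ↔ m ∣ Nat.card k - 1 ∧ ∃ g : k[X], g.Monic ∧ g ^ m = φ := by
  rw [← Nat.card_units]
  have dvd_card : m ∣ (unitNorm φ).range.index → m ∣ Nat.card kˣ :=
    fun h => h.trans (Subgroup.index_dvd_card _)
  rw [← and_iff_right_of_imp dvd_card]
  refine and_congr_right fun hm => ?_
  rw [dvd_index_iff_le_range_powMonoidHom hm,
    range_unitNorm_le_range_powMonoidHom_iff hφ (Nat.card_units k ▸ hm)]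

theorem index_range_unitNorm_dvd_natDegree {φ : k[X]} (hφ : φ.Monic) :
    (unitNorm φ).range.index ∣ φ.natDegree := by
  have hdvd := Subgroup.index_dvd_of_le (range_powMonoidHom_natDegree_le_range_unitNorm hφ)
  rw [IsCyclic.index_powMonoidHom_range] at hdvd
  exact hdvd.trans (Nat.gcd_dvd_right _ _)

open Classical in
theorem card_sub_one_mul_card_filter_norm_mk_eq_one {n : ℕ} (hn : n ≠ 0) {φ : k[X]}
    (hφ : φ ∈ monicsOfDegree k n) :
    (Nat.card k - 1) * #{ψ ∈ monicsOfDegree k n | Algebra.norm k (AdjoinRoot.mk φ ψ) = 1} =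
      ∑ m ∈ n.divisors with m ∣ Nat.card k - 1,
        if ∃ g : k[X], g.Monic ∧ g ^ m = φ then m.totient * Nat.card (AdjoinRoot φ)ˣ else 0 := by
  obtain ⟨hφm, rfl⟩ := mem_monicsOfDegree.1 hφ
  have hdvd := index_range_unitNorm_dvd_natDegree hφm
  have divisors_index : (unitNorm φ).range.index.divisors =
      {m ∈ φ.natDegree.divisors | m ∣ Nat.card k - 1 ∧ ∃ g : k[X], g.Monic ∧ g ^ m = φ} := by
    ext m
    rw [Nat.mem_divisors, Finset.mem_filter, Nat.mem_divisors, ← dvd_index_range_unitNorm_iff hφm]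
    exact ⟨fun h => ⟨⟨h.1.trans hdvd, hn⟩, h.1⟩, fun h => ⟨h.2, ne_zero_of_dvd_ne_zero hn hdvd⟩⟩
  rw [card_filter_norm_mk_eq_one hφm, card_sub_one_mul_card_ker_unitNorm, ← Finset.sum_filter,
    Finset.filter_filter, ← divisors_index, ← Finset.sum_mul, Nat.sum_totient, mul_comm]

open Classical in
theorem filter_isPow_monicsOfDegree {m : ℕ} (hm : m ≠ 0) (d : ℕ) :
    {φ ∈ monicsOfDegree k (m * d) | ∃ g : k[X], g.Monic ∧ g ^ m = φ} =
      (monicsOfDegree k d).image (· ^ m) := by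
  ext φ
  rw [Finset.mem_filter, Finset.mem_image]
  constructor
  · rintro ⟨hφ, g, hg, rfl⟩
    have hdeg := (mem_monicsOfDegree.1 hφ).2
    rw [hg.natDegree_pow, Nat.mul_right_inj hm] at hdeg
    exact ⟨g, mem_monicsOfDegree.2 ⟨hg, hdeg⟩, rfl⟩
  · rintro ⟨g, hg, rfl⟩
    exact ⟨pow_mem_monicsOfDegree hg m, g, (mem_monicsOfDegree.1 hg).1, rfl⟩

open Classical in
theorem sum_filter_isPow_card_units {n m : ℕ} (hn : n ≠ 0) (hmn : m ∣ n) :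
    ∑ φ ∈ monicsOfDegree k n with ∃ g : k[X], g.Monic ∧ g ^ m = φ, Nat.card (AdjoinRoot φ)ˣ =
      (Nat.card k - 1) * Nat.card k ^ (n - 1 + n / m) := by
  obtain ⟨d, rfl⟩ := hmn
  obtain ⟨hm, hd⟩ := mul_ne_zero_iff.1 hn
  obtain ⟨d, rfl⟩ := Nat.exists_eq_succ_of_ne_zero hd
  rw [filter_isPow_monicsOfDegree hm, Finset.sum_image
    ((pow_injOn_monic hm).mono fun g hg => (mem_monicsOfDegree.1 hg).1)]
  have card_units (g) (hg : g ∈ monicsOfDegree k (d + 1)) : Nat.card (AdjoinRoot (g ^ m))ˣ =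
      Nat.card k ^ (m * (d + 1) - (d + 1)) * Nat.card (AdjoinRoot g)ˣ := by
    obtain ⟨hg, hdeg⟩ := mem_monicsOfDegree.1 hg
    rw [card_units_adjoinRoot_pow hg hm, hdeg]
  have exponent : m * (d + 1) - 1 + (d + 1) = m * (d + 1) - (d + 1) + (2 * d + 1) := by
    have := Nat.le_mul_of_pos_left (d + 1) (Nat.pos_of_ne_zero hm)
    omega
  rw [Finset.sum_congr rfl card_units, ← Finset.mul_sum, sum_card_units_adjoinRoot,
    card_coprimePairs_succ, Nat.succ_eq_add_one, Nat.mul_div_cancel_left _ (Nat.pos_of_ne_zero hm),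
    exponent, pow_add]
  ring

open Classical in
theorem natCard_resPairs (n : ℕ) :
    Nat.card (ResPairs k n) = ∑ φ ∈ monicsOfDegree k n,
      #{ψ ∈ monicsOfDegree k n | Algebra.norm k (AdjoinRoot.mk φ ψ) = 1} := by
  have resPairs_eq : ResPairs k n = {x ∈ monicsOfDegree k n ×ˢ monicsOfDegree k n |
      Algebra.norm k (AdjoinRoot.mk x.1 x.2) = 1} := by
    ext ⟨φ, ψ⟩
    have hres (hφ : φ.Monic) :
        resultantAC φ ψ = 1 ↔ Algebra.norm k (AdjoinRoot.mk φ ψ) = 1 := by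
      rw [← algebraMap_norm_mk_eq_resultantAC hφ, map_eq_one_iff _ (algebraMap k _).injective]
    simp only [ResPairs, Set.mem_ofPred_eq, Finset.coe_filter, Finset.mem_product,
      mem_monicsOfDegree]
    grind
  rw [resPairs_eq, Nat.card_coe_set_eq, Set.ncard_coe_finset, Finset.card_filter,
    Finset.sum_product]
  simp only [Finset.card_filter]

end NormOne

theorem stmt_4_general (F : Type*) [Field F] [Fintype F] (q : ℕ) (hq : Fintype.card F = q)
    (n : ℕ) (hn : 1 ≤ n) :
    Nat.card (ResPairs F n) =
      ∑ d ∈ n.divisors with n / d ∣ q - 1, Nat.totient (n / d) * q ^ (n - 1 + d) := by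
  classical
  have hn0 : n ≠ 0 := Nat.one_le_iff_ne_zero.1 hn
  obtain rfl : Nat.card F = q := by rw [Nat.card_eq_fintype_card, hq]
  set q := Nat.card F
  refine Nat.eq_of_mul_eq_mul_left (Nat.sub_pos_of_lt (Finite.one_lt_card (α := F))) ?_
  calc (q - 1) * Nat.card (ResPairs F n)
    _ = ∑ φ ∈ monicsOfDegree F n, ∑ m ∈ n.divisors with m ∣ q - 1,
        if ∃ g : F[X], g.Monic ∧ g ^ m = φ then m.totient * Nat.card (AdjoinRoot φ)ˣ else 0 := by
      rw [natCard_resPairs, Finset.mul_sum]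
      exact Finset.sum_congr rfl fun φ => card_sub_one_mul_card_filter_norm_mk_eq_one hn0
    _ = ∑ m ∈ n.divisors with m ∣ q - 1, (q - 1) * (m.totient * q ^ (n - 1 + n / m)) := by
      rw [Finset.sum_comm]
      refine Finset.sum_congr rfl fun m hm => ?_
      have hmn := Nat.dvd_of_mem_divisors (Finset.mem_filter.1 hm).1
      rw [← Finset.sum_filter, ← Finset.mul_sum, sum_filter_isPow_card_units hn0 hmn,
        mul_left_comm]
    _ = (q - 1) * ∑ d ∈ n.divisors with n / d ∣ q - 1, (n / d).totient * q ^ (n - 1 + d) := by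
      rw [← Finset.mul_sum, Finset.sum_filter, ← Nat.sum_div_divisors, ← Finset.sum_filter]
      congr 1
      refine Finset.sum_congr rfl fun d hd => ?_
      rw [Nat.div_div_self (Nat.dvd_of_mem_divisors (Finset.mem_filter.1 hd).1) hn0]

/-- if `q ≡ 1 (mod n)` then `|Res_n(F_q)| = Σ_{d ∣ n} ϕ(n/d) · q^{n-1+d}`. -/
theorem stmt_4 (F : Type*) [Field F] [Fintype F] (q : ℕ) (hq : Fintype.card F = q)
    (n : ℕ) (hn : 1 ≤ n) (hmod : n ∣ (q - 1)) :
    Nat.card (ResPairs F n) =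
      ∑ d ∈ n.divisors, Nat.totient (n / d) * q ^ (n - 1 + d) := by
  rw [stmt_4_general F q hq n hn, Finset.filter_true_of_mem fun d hd =>
    (Nat.div_dvd_of_dvd (Nat.dvd_of_mem_divisors hd)).trans hmod]
end
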